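/- Let f be the elimination scoring rule associated to a monotone scoring system s, defined on profiles of weak orders over all finite candidate sets, and suppose f satisfies independence of clones and respects cohesive majorities. Then for every m ≥ 2, the linear order type τ = (1,1,…,1) of length m has scoring vector satisfying s(τ)₁ > 0 and s(τ)_j = 0 for all 2 ≤ j ≤ m; i.e., s(τ) is a positive multiple of (1,0,…,0). -/

import Mathlib

/-!
The idea is to test cohesive majorities on profiles that mix linear orders on `m` candidates with
approval ballots `{all but b} ≻ {b}`. Write `s₁ ≥ s₂ ≥ ⋯ ≥ 0` for the scores of the linear type of
length `m` and `x` for the score of the top class of such an approval ballot.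

* `s₁ > 0`: if all scores vanished, the favourite of a single linear voter could be eliminated
  first (`first_score_pos`).
* If `s₂ > 0` and `m ≥ 3`, then `x ≥ s₁` (`first_score_le_approval`). Suppose `x < s₁`, and fix a
  candidate `a ≠ b`. Take `α` approval ballots, `α` linear orders with `b` first and `a` last whose
  second places are shared by the other candidates, and one voter `a ≻ b ≻ ⋯`. For large `α`
  the candidate `a` has a lowest score. After its elimination `b` is on top for a strict majority,
  so `b` wins. But `a` is on top for the approval voters and the last voter, a strict majority none
  of whom has `b` on top.
* `x ≥ s₁` is incompatible with `s₂ > 0` (`second_score_eq_zero`). Take `α`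
  approval ballots and `α + 1` linear orders with `b` first, second places being shared by all
  other candidates. The majority forces `b` to win, but for `x ≥ s₁` and large `α` every other
  candidate scores at least as much as `b`, so `b` may be eliminated first.

Hence `s₂ = 0` (for `m = 2` it is the last score), and monotonicity gives `s_j = 0` for all `j ≥ 2`. In the code `b` is the candidate
`0`, `a` is the last element of `Fin m`, and `m = k + 3`.
-/

open Finset

attribute [local instance] Classical.propDecidable

/-- A weak order on a candidate type `C`: a complete and transitive binary relation. -/
structure WeakOrder (C : Type*) where
  rel : C → C → Prop
  total : ∀ a b, rel a b ∨ rel b a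
  trans : ∀ a b c, rel a b → rel b c → rel a c

namespace WeakOrder

variable {C : Type*}

/-- Strict preference. -/
def strict (w : WeakOrder C) (a b : C) : Prop :=
  w.rel a b ∧ ¬ w.rel b a

/-- Indifference. -/
def indiff (w : WeakOrder C) (a b : C) : Prop :=
  w.rel a b ∧ w.rel b a

/-- The set of top-ranked candidates of `w` within the candidate set `A`. -/
noncomputable def topSet (w : WeakOrder C) (A : Finset C) : Finset C :=
  A.filter fun c => ∀ d ∈ A, w.rel c d

variable [DecidableEq C]

/-- Number of candidates in `A` strictly preferred to `a`. -/
noncomputable def cardAbove (w : WeakOrder C) (A : Finset C) (a : C) : ℕ :=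
  (A.filter fun b => w.strict b a).card

/-- The (0-based) index of the indifference class of `a` within `A`
(0 = top indifference class). -/
noncomputable def classIdx (w : WeakOrder C) (A : Finset C) (a : C) : ℕ :=
  ((A.filter fun b => w.strict b a).image (w.cardAbove A)).card

/-- The number of indifference classes of `w` on `A`. -/
noncomputable def numClasses (w : WeakOrder C) (A : Finset C) : ℕ :=
  (A.image (w.cardAbove A)).card

/-- The order type of `w` on `A`: the list of sizes of its indifference classes,
from the top class downwards. -/
noncomputable def orderType (w : WeakOrder C) (A : Finset C) : List ℕ :=
  (List.range (w.numClasses A)).map fun j => (A.filter fun a => w.classIdx A a = j).card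

end WeakOrder

/-- Weak order induced by a rank function (smaller rank = more preferred). -/
def ofRank {C : Type*} (ρ : C → ℕ) : WeakOrder C where
  rel a b := ρ a ≤ ρ b
  total a b := le_total _ _
  trans _ _ _ hab hbc := le_trans hab hbc

section Rules

variable {C N : Type*} [DecidableEq C] [Fintype N]

/-- The score of candidate `a` in profile `P` on remaining candidate set `A`,
under the scoring system `s` (which maps an order type and a 0-based class index
to a real score). -/
noncomputable def totalScore (s : List ℕ → ℕ → ℝ) (P : N → WeakOrder C)
    (A : Finset C) (a : C) : ℝ :=
  ∑ i : N, s ((P i).orderType A) ((P i).classIdx A a)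

/-- The set of lowest-scoring candidates in `A`. -/
noncomputable def lowest (s : List ℕ → ℕ → ℝ) (P : N → WeakOrder C)
    (A : Finset C) : Finset C :=
  A.filter fun c => ∀ d ∈ A, totalScore s P A c ≤ totalScore s P A d

/-- Fuel-based helper for the elimination scoring rule. -/
noncomputable def winnersAux (s : List ℕ → ℕ → ℝ) (P : N → WeakOrder C) :
    ℕ → Finset C → Finset C
  | 0, A => A
  | n + 1, A =>
    if A.card ≤ 1 then A
    else (lowest s P A).biUnion fun c => winnersAux s P n (A.erase c)

/-- The elimination scoring rule associated with scoring system `s`: repeatedly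
eliminate a lowest-scoring candidate (parallel-universe tie-breaking) until one
candidate remains. -/
noncomputable def winners (s : List ℕ → ℕ → ℝ) (P : N → WeakOrder C)
    (A : Finset C) : Finset C :=
  winnersAux s P A.card A

/-- Approval score: the number of voters ranking `c` in their top indifference
class within `A`. -/
noncomputable def approvalScore (P : N → WeakOrder C) (A : Finset C) (c : C) : ℕ :=
  (Finset.univ.filter fun i => c ∈ (P i).topSet A).card

end Rules

/-- The approval scoring system: `s(τ) = (1,0,…,0)` for every order type `τ`
(with `s(τ) = (0)` when `|τ| = 1`). -/
noncomputable def approvalScoring : List ℕ → ℕ → ℝ :=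
  fun τ j => if j = 0 ∧ 2 ≤ τ.length then 1 else 0

/-- The split scoring system: `s(τ) = (1/τ(1),0,…,0)` for every order type `τ`
(with `s(τ) = (0)` when `|τ| = 1`). -/
noncomputable def splitScoring : List ℕ → ℕ → ℝ :=
  fun τ j => if j = 0 ∧ 2 ≤ τ.length then ((τ.headI : ℝ))⁻¹ else 0

/-- The Borda-style scoring system:
`s(τ) = (m−1, m−1−τ(1), …, m−1−∑_{i<k−1} τ(i))` where `m = τ.sum`. -/
noncomputable def bordaScoring : List ℕ → ℕ → ℝ :=
  fun τ j => ((τ.sum : ℝ) - 1) - (((τ.take j).sum : ℕ) : ℝ)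

/-- Nonnegativity of a scoring system. -/
def NonnegSys (s : List ℕ → ℕ → ℝ) : Prop := ∀ τ j, 0 ≤ s τ j

/-- The last score value of every (nonempty) order type is zero. -/
def LastZeroSys (s : List ℕ → ℕ → ℝ) : Prop :=
  ∀ τ : List ℕ, τ ≠ [] → s τ (τ.length - 1) = 0

/-- Monotonicity of a scoring system: earlier indifference classes get weakly
higher scores. -/
def MonotoneSys (s : List ℕ → ℕ → ℝ) : Prop :=
  ∀ τ i j, i ≤ j → s τ j ≤ s τ i

section CloneHoverEtc

variable {C N : Type*}

/-- `X` is a clone set in the profile `P` relative to ambient candidate set `A`. -/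
def IsCloneSet (P : N → WeakOrder C) (A X : Finset C) : Prop :=
  X ⊆ A ∧ ∀ i : N, ∀ c ∈ A, c ∉ X →
    (∀ x ∈ X, (P i).strict x c) ∨ (∀ x ∈ X, (P i).indiff x c) ∨
      (∀ x ∈ X, (P i).strict c x)

/-- `w2` is obtained from `w` by a `c`-hover: `c` is alone in its (non-top)
indifference class in `w`, and in `w2` it is merged into the indifference class
directly above it, everything else being unchanged. -/
def IsCHover (w w2 : WeakOrder C) (c : C) : Prop :=
  (∀ x, x ≠ c → ¬ w.indiff c x) ∧
  (∃ b, w.strict b c) ∧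
  (∀ a b, a ≠ c → (w2.rel a b ↔ w.rel a b)) ∧
  (∀ b, w2.rel c b ↔ (w.rel c b ∨ ((w.strict b c) ∧ ∀ y, w.strict y c → w.rel b y)))

/-- The sincere coarsening of `w` merging all candidates strictly preferred to
`b` into a single top indifference class, leaving the rest unchanged. -/
def mergeAbove (w : WeakOrder C) (b : C) : WeakOrder C where
  rel u v := w.strict u b ∨ (¬ w.strict v b ∧ w.rel u v)
  total u v := by
    by_cases hu : w.strict u b
    · exact Or.inl (Or.inl hu)
    · by_cases hv : w.strict v b
      · exact Or.inr (Or.inl hv)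
      · rcases w.total u v with h | h
        · exact Or.inl (Or.inr ⟨hv, h⟩)
        · exact Or.inr (Or.inr ⟨hu, h⟩)
  trans u v x huv hvx := by
    rcases huv with h | ⟨hv, huv⟩
    · exact Or.inl h
    · rcases hvx with h | ⟨hx, hvx⟩
      · exact absurd h hv
      · exact Or.inr ⟨hx, w.trans _ _ _ huv hvx⟩

/-- Pairwise majority margin of `a` over `b`. -/
noncomputable def margin [Fintype N] (P : N → WeakOrder C) (a b : C) : ℤ :=
  ((Finset.univ.filter fun i => (P i).strict a b).card : ℤ) -
    ((Finset.univ.filter fun i => (P i).strict b a).card : ℤ)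

end CloneHoverEtc

section STV

variable {C N : Type*} [DecidableEq C] [Fintype C] [Fintype N]

/-- The supporters of `c` among remaining candidates `R`: voters with `c` in
their top indifference class within `R`. -/
noncomputable def suppSet (P : N → WeakOrder C) (R : Finset C) (c : C) : Finset N :=
  Finset.univ.filter fun i => ∀ d ∈ R, (P i).rel c d

/-- A state of the Approval-STV computation: remaining candidates, selected
candidates, and the budget of each voter. -/
structure STVState (C N : Type*) where
  R : Finset C
  W : Finset C
  b : N → ℝ

/-- One step of Approval-STV with quota `q`: either select an eligible candidate
(whose supporters hold strictly more than `q` budget), charging its supporters a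
total of exactly `q`, or, if no candidate is eligible, eliminate some candidate. -/
inductive STVStep (P : N → WeakOrder C) (q : ℝ) : STVState C N → STVState C N → Prop
  | select (R W : Finset C) (b b' : N → ℝ) (c : C) (hc : c ∈ R)
      (helig : q < ∑ i ∈ suppSet P R c, b i)
      (hpay : ∀ i ∉ suppSet P R c, b' i = b i)
      (hdec : ∀ i : N, b' i ≤ b i)
      (hnn : ∀ i : N, 0 ≤ b' i)
      (htot : ∑ i ∈ suppSet P R c, b' i = (∑ i ∈ suppSet P R c, b i) - q) :
      STVStep P q ⟨R, W, b⟩ ⟨R.erase c, insert c W, b'⟩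
  | eliminate (R W : Finset C) (b : N → ℝ) (c : C) (hc : c ∈ R)
      (hnone : ∀ c' ∈ R, (∑ i ∈ suppSet P R c', b i) ≤ q) :
      STVStep P q ⟨R, W, b⟩ ⟨R.erase c, W, b⟩

/-- `W` is a possible outcome of an execution of Approval-STV with quota `q`:
starting from all candidates remaining, empty committee and unit budgets, some
sequence of steps ends with no candidate remaining and committee `W`. -/
def IsSTVOutcome (P : N → WeakOrder C) (q : ℝ) (W : Finset C) : Prop :=
  ∃ b : N → ℝ,
    Relation.ReflTransGen (STVStep P q) ⟨Finset.univ, ∅, fun _ => 1⟩ ⟨∅, W, b⟩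

/-- The closure of `T` with respect to the voter group `S`. -/
noncomputable def closureSet (P : N → WeakOrder C) (S : Finset N) (T : Finset C) :
    Finset C :=
  Finset.univ.filter fun c => ∃ i ∈ S, ∃ t ∈ T, (P i).rel c t

end STV

/-- A weak order is `T`-supporting if every member of `T` is ranked weakly above
every non-member. -/
def IsTSupporting {C : Type*} (w : WeakOrder C) (T : Finset C) : Prop :=
  ∀ t ∈ T, ∀ c, c ∉ T → w.rel t c

/-! ### Elimination scoring rules -/

section Elimination

variable {C N : Type*} [DecidableEq C] [Fintype N]

lemma winnersAux_subset (s : List ℕ → ℕ → ℝ) (P : N → WeakOrder C) (n : ℕ) (A : Finset C) :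
    winnersAux s P n A ⊆ A := by
  induction n generalizing A with
  | zero => simp [winnersAux]
  | succ n ih =>
    rw [winnersAux]
    split_ifs
    · exact subset_rfl
    · exact Finset.biUnion_subset.2 fun c _ => (ih _).trans (Finset.erase_subset _ _)

lemma winners_subset (s : List ℕ → ℕ → ℝ) (P : N → WeakOrder C) (A : Finset C) :
    winners s P A ⊆ A :=
  winnersAux_subset s P _ A

lemma mem_lowest {s : List ℕ → ℕ → ℝ} {P : N → WeakOrder C} {A : Finset C} {c : C} :
    c ∈ lowest s P A ↔ c ∈ A ∧ ∀ d ∈ A, totalScore s P A c ≤ totalScore s P A d :=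
  Finset.mem_filter

lemma lowest_nonempty (s : List ℕ → ℕ → ℝ) (P : N → WeakOrder C) {A : Finset C}
    (hA : A.Nonempty) : (lowest s P A).Nonempty := by
  obtain ⟨c, hc, hmin⟩ := Finset.exists_min_image A (totalScore s P A) hA
  exact ⟨c, mem_lowest.2 ⟨hc, hmin⟩⟩

lemma winnersAux_nonempty (s : List ℕ → ℕ → ℝ) (P : N → WeakOrder C) (n : ℕ) {A : Finset C}
    (hA : A.Nonempty) : (winnersAux s P n A).Nonempty := by
  induction n generalizing A with
  | zero => simpa [winnersAux] using hA
  | succ n ih =>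
    rw [winnersAux]
    split_ifs with h
    · exact hA
    · obtain ⟨c, hc⟩ := lowest_nonempty s P hA
      have hcA : c ∈ A := (mem_lowest.1 hc).1
      have hne : (A.erase c).Nonempty := by
        rw [← Finset.card_pos, Finset.card_erase_of_mem hcA]
        omega
      obtain ⟨d, hd⟩ := ih hne
      exact ⟨d, Finset.mem_biUnion.2 ⟨c, hc, hd⟩⟩

lemma winners_nonempty (s : List ℕ → ℕ → ℝ) (P : N → WeakOrder C) {A : Finset C}
    (hA : A.Nonempty) : (winners s P A).Nonempty :=
  winnersAux_nonempty s P _ hA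

/-- Eliminating any lowest-scoring candidate is one branch of parallel-universe tie-breaking. -/
lemma winners_erase_subset (s : List ℕ → ℕ → ℝ) (P : N → WeakOrder C) {A : Finset C}
    (hA : 2 ≤ A.card) {c : C} (hc : c ∈ lowest s P A) :
    winners s P (A.erase c) ⊆ winners s P A := by
  have hcA : c ∈ A := (mem_lowest.1 hc).1
  obtain ⟨n, hn⟩ : ∃ n, A.card = n + 1 := ⟨A.card - 1, by omega⟩
  have he : (A.erase c).card = n := by rw [Finset.card_erase_of_mem hcA]; omega
  intro d hd
  rw [winners, he] at hd
  rw [winners, hn, winnersAux, if_neg (by omega)]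
  exact Finset.mem_biUnion.2 ⟨c, hc, hd⟩

/-- If `c` is lowest-scoring, then some other candidate wins. -/
lemma exists_winner_ne_of_lowest (s : List ℕ → ℕ → ℝ) (P : N → WeakOrder C) {A : Finset C}
    (hA : 2 ≤ A.card) {c : C} (hc : c ∈ lowest s P A) :
    ∃ d ∈ winners s P A, d ≠ c := by
  have hcA : c ∈ A := (mem_lowest.1 hc).1
  have hne : (A.erase c).Nonempty := by
    rw [← Finset.card_pos, Finset.card_erase_of_mem hcA]
    omega
  obtain ⟨d, hd⟩ := winners_nonempty s P hne
  exact ⟨d, winners_erase_subset s P hA hc hd, Finset.ne_of_mem_erase (winners_subset s P _ hd)⟩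

/-- The elimination rule is anonymous: it does not depend on how voters are labelled. -/
lemma winners_comp_equiv {M : Type*} [Fintype M] (s : List ℕ → ℕ → ℝ) (P : N → WeakOrder C)
    (e : M ≃ N) (A : Finset C) : winners s (fun i => P (e i)) A = winners s P A := by
  have hts : totalScore s (fun i => P (e i)) = totalScore s P := by
    funext A a
    exact Equiv.sum_comp e fun i => s ((P i).orderType A) ((P i).classIdx A a)
  have hlow : lowest s (fun i => P (e i)) = lowest s P := by
    funext A
    simp only [lowest, hts]
  have haux : ∀ n A, winnersAux s (fun i => P (e i)) n A = winnersAux s P n A := by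
    intro n
    induction n with
    | zero => intro A; rfl
    | succ n ih => intro A; simp only [winnersAux, hlow, ih]
  exact haux _ _

end Elimination

/-! ### Linear orders and approval ballots -/

/-- The linear order in which the candidate `x` has the (0-based) position `σ x`. -/
def linOrder {m : ℕ} (σ : Equiv.Perm (Fin m)) : WeakOrder (Fin m) :=
  ofRank fun x => (σ x : ℕ)

/-- The weak order in which all candidates tie at the top, except that `0` is last. -/
def bottomZero (k : ℕ) : WeakOrder (Fin (k + 3)) :=
  ofRank fun x => if x = 0 then 1 else 0

lemma linOrder_strict {m : ℕ} (σ : Equiv.Perm (Fin m)) (a b : Fin m) :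
    (linOrder σ).strict a b ↔ σ a < σ b := by
  simp only [linOrder, ofRank, WeakOrder.strict, Fin.lt_def]
  omega

lemma linOrder_cardAbove {m : ℕ} (σ : Equiv.Perm (Fin m)) (a : Fin m) :
    (linOrder σ).cardAbove univ a = σ a := by
  simp only [WeakOrder.cardAbove, linOrder_strict]
  rw [← Fin.card_Iio (σ a)]
  refine Finset.card_bij (fun x _ => σ x) (by simp) (by simp) ?_
  intro y hy
  exact ⟨σ.symm y, by simpa using hy, by simp⟩

lemma linOrder_classIdx {m : ℕ} (σ : Equiv.Perm (Fin m)) (a : Fin m) :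
    (linOrder σ).classIdx univ a = σ a := by
  rw [WeakOrder.classIdx, Finset.card_image_of_injective]
  · exact linOrder_cardAbove σ a
  · intro x y h
    simpa [linOrder_cardAbove, Fin.val_inj] using h

lemma linOrder_orderType {m : ℕ} (σ : Equiv.Perm (Fin m)) :
    (linOrder σ).orderType univ = List.replicate m 1 := by
  have hnum : (linOrder σ).numClasses univ = m := by
    rw [WeakOrder.numClasses, Finset.card_image_of_injective]
    · simp
    · intro x y h
      simpa [linOrder_cardAbove, Fin.val_inj] using h
  rw [WeakOrder.orderType, hnum, List.eq_replicate_iff]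
  refine ⟨by simp, ?_⟩
  intro b hb
  obtain ⟨j, hj, rfl⟩ := List.mem_map.1 hb
  rw [List.mem_range] at hj
  rw [Finset.card_eq_one]
  refine ⟨σ.symm ⟨j, hj⟩, ?_⟩
  ext x
  simp [linOrder_classIdx, Equiv.eq_symm_apply, Fin.ext_iff]

lemma linOrder_mem_topSet {m : ℕ} (σ : Equiv.Perm (Fin m)) (A : Finset (Fin m)) (c : Fin m) :
    c ∈ (linOrder σ).topSet A ↔ c ∈ A ∧ ∀ d ∈ A, σ c ≤ σ d := by
  simp [WeakOrder.topSet, linOrder, ofRank]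

/-- If `c` is a top candidate of a linear order within `A`, it is the only one. -/
lemma linOrder_topSet_eq {m : ℕ} (σ : Equiv.Perm (Fin m)) {A : Finset (Fin m)} {c d : Fin m}
    (hc : c ∈ (linOrder σ).topSet A) (hd : d ∈ (linOrder σ).topSet A) : d = c := by
  rw [linOrder_mem_topSet] at hc hd
  exact σ.injective (le_antisymm (hd.2 c hc.1) (hc.2 d hd.1))

lemma bottomZero_strict (k : ℕ) (a b : Fin (k + 3)) :
    (bottomZero k).strict a b ↔ a ≠ 0 ∧ b = 0 := by
  simp only [bottomZero, ofRank, WeakOrder.strict]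
  by_cases ha : a = 0 <;> by_cases hb : b = 0 <;> simp [ha, hb]

lemma bottomZero_cardAbove (k : ℕ) (a : Fin (k + 3)) :
    (bottomZero k).cardAbove univ a = if a = 0 then k + 2 else 0 := by
  simp only [WeakOrder.cardAbove, bottomZero_strict]
  by_cases ha : a = 0
  · simp [ha, Finset.filter_ne']
  · simp [ha]

lemma bottomZero_classIdx (k : ℕ) (a : Fin (k + 3)) :
    (bottomZero k).classIdx univ a = if a = 0 then 1 else 0 := by
  simp only [WeakOrder.classIdx, bottomZero_strict]
  by_cases ha : a = 0
  · rw [if_pos ha, Finset.card_eq_one]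
    refine ⟨0, ?_⟩
    ext y
    simp only [ha, and_true, Finset.mem_image, Finset.mem_filter, Finset.mem_univ, true_and,
      Finset.mem_singleton, bottomZero_cardAbove]
    constructor
    · rintro ⟨x, hx, rfl⟩
      simp [hx]
    · rintro rfl
      exact ⟨1, by simp, by simp⟩
  · simp [ha]

lemma bottomZero_orderType_length (k : ℕ) :
    ((bottomZero k).orderType univ).length = 2 := by
  have : (univ : Finset (Fin (k + 3))).image ((bottomZero k).cardAbove univ) = {0, k + 2} := by
    ext y
    simp only [Finset.mem_image, Finset.mem_univ, true_and, bottomZero_cardAbove,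
      Finset.mem_insert, Finset.mem_singleton]
    constructor
    · rintro ⟨x, rfl⟩
      split_ifs <;> simp
    · rintro (rfl | rfl)
      · exact ⟨1, by simp⟩
      · exact ⟨0, by simp⟩
  rw [WeakOrder.orderType, List.length_map, List.length_range, WeakOrder.numClasses, this,
    Finset.card_pair (by omega)]

lemma bottomZero_mem_topSet (k : ℕ) (c : Fin (k + 3)) :
    c ∈ (bottomZero k).topSet univ ↔ c ≠ 0 := by
  simp only [WeakOrder.topSet, bottomZero, ofRank, Finset.mem_filter, Finset.mem_univ, true_and,
    forall_const]
  by_cases hc : c = 0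
  · simp only [hc, ne_eq, not_true_eq_false, iff_false]
    intro h
    have := h 1
    simp at this
  · simp [hc]

/-! ### The test profiles -/

/-- The voters of both profiles below: two groups of `(k + 3) * K` voters, each split into blocks
of size `K` labelled by the candidates, and one extra voter. -/
abbrev Voters (k K : ℕ) : Type :=
  (Fin (k + 3) × Fin K) ⊕ ((Fin (k + 3) × Fin K) ⊕ Unit)

/-- The first group only ranks candidate `0` last; in the block of `c`, the second group uses the
linear order `σ c`; the extra voter uses the linear order `ρ`. -/
def testProfile (k K : ℕ) (σ : Fin (k + 3) → Equiv.Perm (Fin (k + 3)))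
    (ρ : Equiv.Perm (Fin (k + 3))) : Voters k K → WeakOrder (Fin (k + 3)) :=
  Sum.elim (fun _ => bottomZero k) (Sum.elim (fun p => linOrder (σ p.1)) fun _ => linOrder ρ)

/-- Scores in `testProfile`: each nonzero candidate gets `s(k+2,1)₁` from every voter of the
first group, and candidate `0` gets nothing from them. -/
lemma testProfile_score (s : List ℕ → ℕ → ℝ) (hlz : LastZeroSys s) (k K : ℕ)
    (σ : Fin (k + 3) → Equiv.Perm (Fin (k + 3))) (ρ : Equiv.Perm (Fin (k + 3)))
    (a : Fin (k + 3)) :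
    totalScore s (testProfile k K σ ρ) univ a =
      (if a = 0 then 0 else ((k : ℝ) + 3) * K * s ((bottomZero k).orderType univ) 0) +
      (K * ∑ c, s (List.replicate (k + 3) 1) (σ c a) + s (List.replicate (k + 3) 1) (ρ a)) := by
  have h1 : s ((bottomZero k).orderType univ) 1 = 0 := by
    have := hlz ((bottomZero k).orderType univ) (by
      intro h
      have := bottomZero_orderType_length k
      simp [h] at this)
    rwa [bottomZero_orderType_length] at this
  simp only [totalScore, testProfile, Fintype.sum_sum_type, Sum.elim_inl, Sum.elim_inr,
    linOrder_orderType, linOrder_classIdx, bottomZero_classIdx, Fintype.sum_prod_type,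
    Finset.sum_const, Finset.card_univ, Fintype.card_fin, nsmul_eq_mul, Finset.mul_sum,
    Fintype.card_unit]
  by_cases ha : a = 0
  · simp [ha, h1]
  · simp [ha]

/-! ### Consequences of cohesive majorities -/

section Majority

variable {s : List ℕ → ℕ → ℝ}

/-- The cohesive-majority property of the rule `f_s`, for voters indexed by an arbitrary finite
type. -/
def RespectsMajorities (s : List ℕ → ℕ → ℝ) : Prop :=
  ∀ (m : ℕ) (N : Type) [Fintype N] (P : N → WeakOrder (Fin m)) (A : Finset (Fin m))
    (S : Finset N), Fintype.card N < 2 * S.card → (∃ c ∈ A, ∀ i ∈ S, c ∈ (P i).topSet A) →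
    ∀ d ∈ winners s P A, ∃ i ∈ S, d ∈ (P i).topSet A

/-- A single linear voter forces the first score to be positive: otherwise all scores vanish and
the favourite of the voter may be eliminated first. -/
lemma first_score_pos (hnn : NonnegSys s) (hmono : MonotoneSys s) (hmaj : RespectsMajorities s)
    {m : ℕ} (hm : 2 ≤ m) : 0 < s (List.replicate m 1) 0 := by
  by_contra h0
  have hz : ∀ j, s (List.replicate m 1) j = 0 := fun j =>
    le_antisymm ((hmono _ 0 j (Nat.zero_le _)).trans (not_lt.1 h0)) (hnn _ _)
  obtain ⟨k, rfl⟩ : ∃ k, m = k + 1 := ⟨m - 1, by omega⟩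
  let P : Unit → WeakOrder (Fin (k + 1)) := fun _ => linOrder 1
  have h0top : (0 : Fin (k + 1)) ∈ (linOrder (1 : Equiv.Perm (Fin (k + 1)))).topSet univ := by
    simp [linOrder_mem_topSet]
  have hlow : (0 : Fin (k + 1)) ∈ lowest s P univ := by
    simp [lowest, totalScore, P, linOrder_orderType, hz]
  obtain ⟨d, hd, hd0⟩ := exists_winner_ne_of_lowest s P (by simpa using hm) hlow
  obtain ⟨i, -, hi⟩ := hmaj _ Unit P univ univ (by simp) ⟨0, by simp, fun _ _ => h0top⟩ d hd
  exact hd0 (linOrder_topSet_eq 1 h0top hi)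

/-- If the second score of the linear type were positive, an approval ballot for all but one
candidate would give its approved candidates at least as much as a linear order gives its top
candidate. Otherwise, consider a majority approving candidate `last`, most of whom approve
everybody but `0`, against linear voters with `0` on top and `last` at the bottom: `last` may be
eliminated first, after which `0` is the first choice of a strict majority and wins, although
nobody in the original majority has it on top. -/
lemma first_score_le_approval (hnn : NonnegSys s) (hlz : LastZeroSys s)
    (hmaj : RespectsMajorities s) (k : ℕ) (h1 : 0 < s (List.replicate (k + 3) 1) 1) :
    s (List.replicate (k + 3) 1) 0 ≤ s ((bottomZero k).orderType univ) 0 := by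
  set t := List.replicate (k + 3) 1 with ht
  set x := s ((bottomZero k).orderType univ) 0 with hx
  by_contra! hlt
  obtain ⟨K₁, hK₁⟩ := exists_nat_gt (s t 0 / s t 1)
  obtain ⟨K₂, hK₂⟩ := exists_nat_gt (s t 0 / (s t 0 - x))
  obtain ⟨K, hK⟩ : ∃ K, K = max K₁ K₂ := ⟨_, rfl⟩
  have hKa : s t 0 ≤ K * s t 1 := by
    rw [div_lt_iff₀ h1] at hK₁
    refine hK₁.le.trans (mul_le_mul_of_nonneg_right ?_ h1.le)
    exact_mod_cast hK ▸ le_max_left _ _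
  have hKb : s t 0 ≤ K * (s t 0 - x) := by
    rw [div_lt_iff₀ (by linarith)] at hK₂
    refine hK₂.le.trans (mul_le_mul_of_nonneg_right ?_ (by linarith))
    exact_mod_cast hK ▸ le_max_right _ _
  let last : Fin (k + 3) := Fin.last (k + 2)
  have hlast0 : last ≠ 0 := by simp [last, Fin.ext_iff]
  have hlast1 : last ≠ 1 := by simp [last, Fin.ext_iff]
  have h01 : (0 : Fin (k + 3)) ≠ 1 := by simp
  let σ : Fin (k + 3) → Equiv.Perm (Fin (k + 3)) := fun c =>
    if c = 0 ∨ c = last then 1 else Equiv.swap 1 c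
  let ρ : Equiv.Perm (Fin (k + 3)) := finRotate (k + 3)
  let P := testProfile k K σ ρ
  have hσ0 : ∀ c, σ c 0 = 0 := by
    intro c
    by_cases hc : c = 0 ∨ c = last
    · simp [σ, hc]
    · simp only [σ, if_neg hc]
      push Not at hc
      exact Equiv.swap_apply_of_ne_of_ne h01 hc.1.symm
  have hσlast : ∀ c, σ c last = last := by
    intro c
    by_cases hc : c = 0 ∨ c = last
    · simp [σ, hc]
    · simp only [σ, if_neg hc]
      push Not at hc
      exact Equiv.swap_apply_of_ne_of_ne hlast1 hc.2.symm
  have hσself : ∀ c, c ≠ 0 → c ≠ last → σ c c = 1 := by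
    intro c hc hc'
    simp [σ, hc, hc']
  have hρlast : ρ last = 0 := finRotate_last
  have hρ0 : ρ 0 = 1 := by simp [ρ]
  have hlastz : s t (last : ℕ) = 0 := by
    have := hlz t (by simp [ht])
    simpa [ht, last] using this
  have hscoreLast : totalScore s P univ last = ((k : ℝ) + 3) * K * x + s t 0 := by
    rw [testProfile_score s hlz]
    simp only [if_neg hlast0, hσlast, hρlast]
    simp [← ht, hlastz, ← hx]
  have hlow : last ∈ lowest s P univ := by
    refine mem_lowest.2 ⟨Finset.mem_univ _, fun d _ => ?_⟩
    rw [hscoreLast, testProfile_score s hlz, ← ht, ← hx]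
    have hρd := hnn t (ρ d)
    by_cases hd0 : d = 0
    · subst hd0
      simp only [hσ0, if_true, Finset.sum_const, Finset.card_univ, Fintype.card_fin,
        nsmul_eq_mul]
      push_cast
      have hk : (0 : ℝ) ≤ k := Nat.cast_nonneg k
      have hKn : (0 : ℝ) ≤ K := Nat.cast_nonneg K
      have : 0 ≤ ((k : ℝ) + 2) * (K * (s t 0 - x)) := by
        apply mul_nonneg (by linarith) (mul_nonneg hKn (by linarith))
      simp only [Fin.coe_ofNat_eq_mod, Nat.zero_mod] at *
      linarith
    · by_cases hdl : d = last
      · subst hdl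
        simp [hσlast, hlastz, hρlast, hd0]
      · rw [if_neg hd0]
        have hle : s t 1 ≤ ∑ c, s t (σ c d) := by
          have := Finset.single_le_sum (f := fun c => s t (σ c d)) (fun c _ => hnn t _)
            (Finset.mem_univ d)
          simpa [hσself d hd0 hdl] using this
        have := mul_le_mul_of_nonneg_left hle (Nat.cast_nonneg (α := ℝ) K)
        linarith
  have hcard : 2 ≤ (univ : Finset (Fin (k + 3))).card := by simp
  -- Once `last` is gone, the linear voters form a majority with `0` on top.
  have hσtop : ∀ c, (0 : Fin (k + 3)) ∈ (linOrder (σ c)).topSet (univ.erase last) := by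
    intro c
    rw [linOrder_mem_topSet]
    exact ⟨by simp [hlast0.symm], fun d _ => by rw [hσ0]; exact Fin.zero_le _⟩
  have hρtop : (0 : Fin (k + 3)) ∈ (linOrder ρ).topSet (univ.erase last) := by
    rw [linOrder_mem_topSet]
    refine ⟨by simp [hlast0.symm], fun d hd => ?_⟩
    have hd' : ρ d ≠ 0 := by
      rw [← hρlast]
      exact fun h => Finset.ne_of_mem_erase hd (ρ.injective h)
    rw [hρ0]
    exact Fin.one_le_of_ne_zero hd'
  have h0win : (0 : Fin (k + 3)) ∈ winners s P univ := by
    apply winners_erase_subset s P hcard hlow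
    obtain ⟨d, hd⟩ := winners_nonempty s P (A := univ.erase last) ⟨0, by simp [hlast0.symm]⟩
    let S : Finset (Voters k K) := univ.image Sum.inr
    have hS : S.card = (k + 3) * K + 1 := by
      rw [Finset.card_image_of_injective _ Sum.inr_injective]
      simp
    obtain ⟨i, hi, hdi⟩ := hmaj _ _ P (univ.erase last) S (by simp [hS]; omega)
      ⟨0, by simp [hlast0.symm], by
        intro i hi
        obtain ⟨j, -, rfl⟩ := Finset.mem_image.1 hi
        rcases j with p | u
        · exact hσtop p.1
        · exact hρtop⟩ d hd
    obtain ⟨j, -, rfl⟩ := Finset.mem_image.1 hi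
    rcases j with p | u
    · exact linOrder_topSet_eq _ (hσtop p.1) hdi ▸ hd
    · exact linOrder_topSet_eq _ hρtop hdi ▸ hd
  -- The first group and the extra voter form a majority with `last` on top and `0` never on top.
  have hρtop' : last ∈ (linOrder ρ).topSet univ := by
    rw [linOrder_mem_topSet]
    exact ⟨Finset.mem_univ _, fun d _ => by rw [hρlast]; exact Fin.zero_le _⟩
  let S : Finset (Voters k K) := insert (Sum.inr (Sum.inr ())) (univ.image Sum.inl)
  have hS : S.card = (k + 3) * K + 1 := by
    rw [Finset.card_insert_of_notMem (by simp),
      Finset.card_image_of_injective _ Sum.inl_injective]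
    simp
  obtain ⟨i, hi, h0i⟩ := hmaj _ _ P univ S (by simp [hS]; omega)
    ⟨last, Finset.mem_univ _, by
      intro i hi
      rcases Finset.mem_insert.1 hi with rfl | hi
      · exact hρtop'
      · obtain ⟨j, -, rfl⟩ := Finset.mem_image.1 hi
        exact (bottomZero_mem_topSet k last).2 hlast0⟩ 0 h0win
  rcases Finset.mem_insert.1 hi with rfl | hi
  · exact hlast0 (linOrder_topSet_eq _ hρtop' h0i).symm
  · obtain ⟨j, -, rfl⟩ := Finset.mem_image.1 hi
    exact (bottomZero_mem_topSet k 0).1 h0i rfl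

/-- The second score of the linear type vanishes. Otherwise let a bare majority of linear voters
have `0` on top, their second places being shared by all other candidates, and let everybody
else approve all candidates but `0`. By `first_score_le_approval` the other candidates get from
the approval ballots about as much as `0` gets in total, so that the second places
put them ahead of `0`, and `0` may be eliminated first. -/
lemma second_score_eq_zero (hnn : NonnegSys s) (hlz : LastZeroSys s)
    (hmaj : RespectsMajorities s) (k : ℕ) : s (List.replicate (k + 3) 1) 1 = 0 := by
  by_contra hne
  have h1 : 0 < s (List.replicate (k + 3) 1) 1 := lt_of_le_of_ne (hnn _ _) (Ne.symm hne)
  have hxge := first_score_le_approval hnn hlz hmaj k h1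
  set t := List.replicate (k + 3) 1 with ht
  set x := s ((bottomZero k).orderType univ) 0 with hx
  obtain ⟨K, hK⟩ := exists_nat_gt (s t 0 / s t 1)
  rw [div_lt_iff₀ h1] at hK
  have h01 : (0 : Fin (k + 3)) ≠ 1 := by simp
  let σ : Fin (k + 3) → Equiv.Perm (Fin (k + 3)) := fun c =>
    if c = 0 then 1 else Equiv.swap 1 c
  let P := testProfile k K σ 1
  have hσ0 : ∀ c, σ c 0 = 0 := by
    intro c
    by_cases hc : c = 0
    · simp [σ, hc]
    · simp only [σ, if_neg hc]
      exact Equiv.swap_apply_of_ne_of_ne h01 (Ne.symm hc)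
  have hσself : ∀ c, c ≠ 0 → σ c c = 1 := by
    intro c hc
    simp [σ, hc]
  have hlow : (0 : Fin (k + 3)) ∈ lowest s P univ := by
    refine mem_lowest.2 ⟨Finset.mem_univ _, fun d _ => ?_⟩
    by_cases hd0 : d = 0
    · rw [hd0]
    · rw [testProfile_score s hlz, testProfile_score s hlz, ← ht, ← hx, if_neg hd0]
      have hρd := hnn t ((1 : Equiv.Perm (Fin (k + 3))) d)
      have hle : s t 1 ≤ ∑ c, s t (σ c d) := by
        have := Finset.single_le_sum (f := fun c => s t (σ c d)) (fun c _ => hnn t _)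
          (Finset.mem_univ d)
        simpa [hσself d hd0] using this
      have h2 := mul_le_mul_of_nonneg_left hle (Nat.cast_nonneg (α := ℝ) K)
      have h3 : ((k : ℝ) + 3) * K * s t 0 ≤ ((k : ℝ) + 3) * K * x :=
        mul_le_mul_of_nonneg_left hxge (by positivity)
      simp only [hσ0, if_true, Finset.sum_const, Finset.card_univ, Fintype.card_fin,
        nsmul_eq_mul, Equiv.Perm.one_apply] at *
      push_cast
      simp only [Fin.coe_ofNat_eq_mod, Nat.zero_mod] at *
      linarith
  obtain ⟨d, hd, hd0⟩ := exists_winner_ne_of_lowest s P (by simp) hlow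
  have hσtop : ∀ τ : Equiv.Perm (Fin (k + 3)), τ 0 = 0 →
      (0 : Fin (k + 3)) ∈ (linOrder τ).topSet univ := by
    intro τ hτ
    rw [linOrder_mem_topSet]
    exact ⟨Finset.mem_univ _, fun d _ => by rw [hτ]; exact Fin.zero_le _⟩
  let S : Finset (Voters k K) := univ.image Sum.inr
  have hS : S.card = (k + 3) * K + 1 := by
    rw [Finset.card_image_of_injective _ Sum.inr_injective]
    simp
  obtain ⟨i, hi, hdi⟩ := hmaj _ _ P univ S (by simp [hS]; omega)
    ⟨0, Finset.mem_univ _, by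
      intro i hi
      obtain ⟨j, -, rfl⟩ := Finset.mem_image.1 hi
      rcases j with p | u
      · exact hσtop _ (hσ0 p.1)
      · exact hσtop 1 rfl⟩ d hd
  obtain ⟨j, -, rfl⟩ := Finset.mem_image.1 hi
  rcases j with p | u
  · exact hd0 (linOrder_topSet_eq _ (hσtop _ (hσ0 p.1)) hdi)
  · exact hd0 (linOrder_topSet_eq _ (hσtop 1 rfl) hdi)

end Majority

/-- If the elimination scoring rule of a monotone scoring
system `s` satisfies independence of clones and respects cohesive majorities,
then for every `m ≥ 2` the linear order type `(1,…,1)` of length `m` has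
scoring vector a positive multiple of `(1,0,…,0)`: its first entry is positive
and all later entries are zero. -/
theorem linear_order_types_get_plurality_scores
    (s : List ℕ → ℕ → ℝ)
    (hnn : NonnegSys s) (hlz : LastZeroSys s) (hmono : MonotoneSys s)
    (hclones : ∀ (m n : ℕ) (P : Fin n → WeakOrder (Fin m))
        (A X : Finset (Fin m)), IsCloneSet P A X → ∀ xhat ∈ X,
      (∀ c ∈ A, c ∉ X →
        (c ∈ winners s P A ↔ c ∈ winners s P (A \ X.erase xhat))) ∧
      (xhat ∈ winners s P (A \ X.erase xhat) ↔
        (X ∩ winners s P A).Nonempty))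
    (hmaj : ∀ (m n : ℕ) (P : Fin n → WeakOrder (Fin m))
        (A : Finset (Fin m)) (S : Finset (Fin n)),
      n < 2 * S.card →
      (∃ c ∈ A, ∀ i ∈ S, c ∈ (P i).topSet A) →
      winners s P A ⊆ S.biUnion fun i => (P i).topSet A) :
    ∀ m : ℕ, 2 ≤ m →
      0 < s (List.replicate m 1) 0 ∧
      ∀ j, 1 ≤ j → j ≤ m - 1 → s (List.replicate m 1) j = 0 := by
  have hmaj' : RespectsMajorities s := by
    intro m N _ P A S hS hc d hd
    let e : Fin (Fintype.card N) ≃ N := (Fintype.equivFin N).symm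
    have hsub := hmaj m (Fintype.card N) (fun i => P (e i)) A (S.map e.symm.toEmbedding)
      (by simpa using hS) (by
        obtain ⟨c, hcA, hcS⟩ := hc
        refine ⟨c, hcA, fun i hi => hcS (e i) ?_⟩
        simpa using hi)
    have hd' : d ∈ winners s (fun i => P (e i)) A := by
      rw [winners_comp_equiv]
      exact hd
    obtain ⟨i, hi, hdi⟩ := Finset.mem_biUnion.1 (hsub hd')
    exact ⟨e i, by simpa using hi, hdi⟩
  intro m hm
  refine ⟨first_score_pos hnn hmono hmaj' hm, fun j hj hjm => ?_⟩
  have h1 : s (List.replicate m 1) 1 = 0 := by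
    rcases Nat.lt_or_ge m 3 with h | h
    · obtain rfl : m = 2 := by omega
      simpa using hlz (List.replicate 2 1) (by simp)
    · obtain ⟨k, rfl⟩ : ∃ k, m = k + 3 := ⟨m - 3, by omega⟩
      exact second_score_eq_zero hnn hlz hmaj' k
  exact le_antisymm ((hmono _ 1 j hj).trans h1.le) (hnn _ _)
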